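/- Let d be a natural number with d ≥ 5 and let u ∈ ℝ^d with u ≠ 0. Let V be the open set of points x ∈ ℝ^d such that x + λu ≠ 0 for all λ ≥ 1. Then for every x ∈ V the integral h(x) = ∫₁^∞ ‖x + λu‖^{2−d} dλ converges absolutely, and h is harmonic on V, i.e. Δh(x) = 0 for all x ∈ V, where Δ is the Euclidean Laplacian on ℝ^d. -/

import Mathlib

/-!
The substitution `l = 1 / t` and the homogeneity of the norm turn the integral along the ray into
`h(x) = ∫₀¹ t ^ (d - 4) ‖t x + u‖ ^ (2 - d) dt`, whose integrand is regular up to `t = 0` because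
`u ≠ 0` and `d ≥ 4`. This is a superposition, over a compact set of parameters, of dilates and
translates of the fundamental solution `‖z‖ ^ (2 - d)`, which is harmonic away from the origin;
such superpositions can be differentiated under the integral sign and stay harmonic.
-/

open MeasureTheory Set

/-- The Euclidean Laplacian of `f : ℝ^d → ℝ`, as the sum of the second partial
derivatives along the standard coordinate directions. -/
noncomputable def laplacian {d : ℕ} (f : EuclideanSpace ℝ (Fin d) → ℝ)
    (x : EuclideanSpace ℝ (Fin d)) : ℝ :=
  ∑ i : Fin d,
    fderiv ℝ (fun y => fderiv ℝ f y (EuclideanSpace.single i 1)) x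
      (EuclideanSpace.single i 1)

open Filter InnerProductSpace Module Topology
open scoped Laplacian

section ParametricIntegral

variable {T X F : Type*} [TopologicalSpace T] {K : Set T} [NormedAddCommGroup F]

lemma eventually_forall_norm_le_norm_add_one_of_isCompact [TopologicalSpace X] {f : X → T → F}
    {U : Set X} {x : X} (hK : IsCompact K) (hf : ContinuousOn f.uncurry (U ×ˢ K)) (hx : x ∈ U) :
    ∀ᶠ y in 𝓝[U] x, ∀ t ∈ K, ‖f y t‖ ≤ ‖f x t‖ + 1 := by
  obtain ⟨v, hv, hclose⟩ := hK.mem_uniformity_of_prod hf hx (Metric.dist_mem_uniformity one_pos)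
  filter_upwards [hv] with y hy t ht
  have hdist : ‖f y t - f x t‖ < 1 := by simpa [dist_eq_norm] using hclose y hy t ht
  linarith [norm_le_norm_add_norm_sub' (f y t) (f x t)]

variable [T2Space T] [MeasurableSpace T] [OpensMeasurableSpace T] {μ : Measure T}
  [IsFiniteMeasureOnCompacts μ]

lemma integrableOn_of_continuousOn_uncurry [TopologicalSpace X] {f : X → T → F} {U : Set X}
    {x : X} (hK : IsCompact K) (hf : ContinuousOn f.uncurry (U ×ˢ K)) (hx : x ∈ U) :
    IntegrableOn (f x) K μ :=
  ContinuousOn.integrableOn_compact hK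
    (hf.comp (f := fun t => (x, t)) (by fun_prop) fun _ ht => ⟨hx, ht⟩)

variable [NormedSpace ℝ F]

lemma continuousOn_setIntegral_of_isCompact [TopologicalSpace X] [FirstCountableTopology X]
    {f : X → T → F} {U : Set X} (hK : IsCompact K) (hf : ContinuousOn f.uncurry (U ×ˢ K)) :
    ContinuousOn (fun x => ∫ t in K, f x t ∂μ) U := by
  intro x hx
  refine continuousWithinAt_of_dominated (bound := fun t => ‖f x t‖ + 1) ?_ ?_ ?_ ?_
  · filter_upwards [self_mem_nhdsWithin] with y hy
    exact (integrableOn_of_continuousOn_uncurry hK hf hy).aestronglyMeasurable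
  · filter_upwards [eventually_forall_norm_le_norm_add_one_of_isCompact hK hf hx] with y hy
    exact ae_restrict_of_forall_mem hK.measurableSet hy
  · exact (integrableOn_of_continuousOn_uncurry hK hf hx).norm.add
      (integrableOn_const hK.measure_ne_top)
  · exact ae_restrict_of_forall_mem hK.measurableSet fun t ht =>
      (hf.comp (f := fun y => (y, t)) (by fun_prop) fun y hy => ⟨hy, ht⟩) x hx

lemma hasFDerivAt_setIntegral_of_isCompact [NormedAddCommGroup X] [NormedSpace ℝ X]
    {f : X → T → F} {f' : X → T → X →L[ℝ] F} {U : Set X} {x : X} (hK : IsCompact K)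
    (hU : IsOpen U) (hf : ContinuousOn f.uncurry (U ×ˢ K))
    (hf' : ContinuousOn f'.uncurry (U ×ˢ K))
    (hderiv : ∀ y ∈ U, ∀ t ∈ K, HasFDerivAt (f · t) (f' y t) y) (hx : x ∈ U) :
    HasFDerivAt (fun y => ∫ t in K, f y t ∂μ) (∫ t in K, f' x t ∂μ) x := by
  have hUx : U ∈ 𝓝 x := hU.mem_nhds hx
  have hbound := eventually_forall_norm_le_norm_add_one_of_isCompact hK hf' hx
  rw [hU.nhdsWithin_eq hx] at hbound
  refine hasFDerivAt_integral_of_dominated_of_fderiv_le (bound := fun t => ‖f' x t‖ + 1)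
    (inter_mem hUx hbound) ?_ (integrableOn_of_continuousOn_uncurry hK hf hx)
    (integrableOn_of_continuousOn_uncurry hK hf' hx).aestronglyMeasurable ?_ ?_ ?_
  · filter_upwards [hUx] with y hy
    exact (integrableOn_of_continuousOn_uncurry hK hf hy).aestronglyMeasurable
  · exact ae_restrict_of_forall_mem hK.measurableSet fun t ht y hy => hy.2 t ht
  · exact (integrableOn_of_continuousOn_uncurry hK hf' hx).norm.add
      (integrableOn_const hK.measure_ne_top)
  · exact ae_restrict_of_forall_mem hK.measurableSet fun t ht y hy => hderiv y hy.1 t ht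

end ParametricIntegral

section DilationIntegral

variable {T E F : Type*} [NormedAddCommGroup E] [NormedAddCommGroup F]

/-- The weighted superposition `∫_K c(t) G(s(t) y + w(t)) dμ(t)` of dilates and translates of `G`,
as a function of `y`. -/
noncomputable def dilationIntegral [NormedSpace ℝ E] [NormedSpace ℝ F] [MeasurableSpace T]
    (μ : Measure T) (K : Set T) (c s : T → ℝ) (w : T → E) (G : E → F) (y : E) : F :=
  ∫ t in K, c t • G (s t • y + w t) ∂μ

/-- The points at which every dilate occurring in `dilationIntegral` over `K` is evaluated inside
`Ω`. -/
def dilationDomain [NormedSpace ℝ E] (K : Set T) (s : T → ℝ) (w : T → E) (Ω : Set E) : Set E :=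
  {y | ∀ t ∈ K, s t • y + w t ∈ Ω}

variable [TopologicalSpace T] {K : Set T} {c s : T → ℝ} {w : T → E} {Ω : Set E} {G : E → F}

section NormedSpace

variable [NormedSpace ℝ E] [NormedSpace ℝ F]

lemma isOpen_dilationDomain (hK : IsCompact K) (hs : Continuous s) (hw : Continuous w)
    (hΩ : IsOpen Ω) : IsOpen (dilationDomain K s w Ω) := by
  refine isOpen_iff_eventually.2 fun y hy => ?_
  refine hK.eventually_forall_of_forall_eventually fun t ht => ?_
  have hcont : Continuous fun p : E × T => s p.2 • p.1 + w p.2 := by fun_prop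
  exact hcont.continuousAt.eventually (hΩ.mem_nhds (hy t ht))

lemma continuousOn_uncurry_smul_comp_dilation (hc : Continuous c) (hs : Continuous s)
    (hw : Continuous w) (hG : ContinuousOn G Ω) :
    ContinuousOn (fun y t => c t • G (s t • y + w t)).uncurry (dilationDomain K s w Ω ×ˢ K) := by
  have hcomp : ContinuousOn (fun p : E × T => G (s p.2 • p.1 + w p.2))
      (dilationDomain K s w Ω ×ˢ K) :=
    hG.comp (by fun_prop) fun p hp => hp.1 p.2 hp.2
  exact (hc.comp continuous_snd).continuousOn.smul hcomp

variable [T2Space T] [MeasurableSpace T] [OpensMeasurableSpace T] {μ : Measure T}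
  [IsFiniteMeasureOnCompacts μ]

lemma integrableOn_smul_comp_dilation (hK : IsCompact K) (hc : Continuous c) (hs : Continuous s)
    (hw : Continuous w) (hG : ContinuousOn G Ω) {y : E} (hy : y ∈ dilationDomain K s w Ω) :
    IntegrableOn (fun t => c t • G (s t • y + w t)) K μ :=
  integrableOn_of_continuousOn_uncurry hK (continuousOn_uncurry_smul_comp_dilation hc hs hw hG) hy

lemma dilationIntegral_clm_apply {V : Type*} [NormedAddCommGroup V] [NormedSpace ℝ V]
    {A : E → V →L[ℝ] F} (hK : IsCompact K) (hc : Continuous c) (hs : Continuous s)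
    (hw : Continuous w) (hA : ContinuousOn A Ω) {y : E} (hy : y ∈ dilationDomain K s w Ω) (v : V) :
    dilationIntegral μ K c s w A y v = dilationIntegral μ K c s w (fun z => A z v) y :=
  ContinuousLinearMap.integral_apply (integrableOn_smul_comp_dilation hK hc hs hw hA hy) v

lemma hasFDerivAt_dilationIntegral (hK : IsCompact K) (hc : Continuous c) (hs : Continuous s)
    (hw : Continuous w) (hΩ : IsOpen Ω) (hG : ContDiffOn ℝ 1 G Ω) {y : E}
    (hy : y ∈ dilationDomain K s w Ω) :
    HasFDerivAt (dilationIntegral μ K c s w G)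
      (dilationIntegral μ K (c * s) s w (fderiv ℝ G) y) y := by
  refine hasFDerivAt_setIntegral_of_isCompact hK (isOpen_dilationDomain hK hs hw hΩ)
    (continuousOn_uncurry_smul_comp_dilation hc hs hw hG.continuousOn)
    (continuousOn_uncurry_smul_comp_dilation (hc.mul hs) hs hw
      (hG.continuousOn_fderiv_of_isOpen hΩ le_rfl)) (fun z hz t ht => ?_) hy
  have hGt : HasFDerivAt G (fderiv ℝ G (s t • z + w t)) (s t • z + w t) :=
    ((hG.differentiableOn one_ne_zero).differentiableAt (hΩ.mem_nhds (hz t ht))).hasFDerivAt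
  have haffine : HasFDerivAt (fun y : E => s t • y + w t) (s t • ContinuousLinearMap.id ℝ E) z :=
    ((hasFDerivAt_id z).const_smul (s t)).add_const (w t)
  refine ((hGt.comp z haffine).const_smul (c t)).congr_fderiv ?_
  rw [ContinuousLinearMap.comp_smul, ContinuousLinearMap.comp_id, smul_smul, Pi.mul_apply]

lemma contDiffOn_one_dilationIntegral (hK : IsCompact K) (hc : Continuous c) (hs : Continuous s)
    (hw : Continuous w) (hΩ : IsOpen Ω) (hG : ContDiffOn ℝ 1 G Ω) :
    ContDiffOn ℝ 1 (dilationIntegral μ K c s w G) (dilationDomain K s w Ω) := by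
  have hderiv := fun y hy => hasFDerivAt_dilationIntegral (μ := μ) hK hc hs hw hΩ hG (y := y) hy
  rw [← zero_add 1, contDiffOn_succ_iff_fderiv_of_isOpen (isOpen_dilationDomain hK hs hw hΩ)]
  refine ⟨fun y hy => (hderiv y hy).differentiableAt.differentiableWithinAt, by simp, ?_⟩
  refine contDiffOn_zero.2 (ContinuousOn.congr ?_ fun y hy => (hderiv y hy).fderiv)
  exact continuousOn_setIntegral_of_isCompact hK (continuousOn_uncurry_smul_comp_dilation
    (hc.mul hs) hs hw (hG.continuousOn_fderiv_of_isOpen hΩ le_rfl))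

lemma contDiffOn_two_dilationIntegral (hK : IsCompact K) (hc : Continuous c) (hs : Continuous s)
    (hw : Continuous w) (hΩ : IsOpen Ω) (hG : ContDiffOn ℝ 2 G Ω) :
    ContDiffOn ℝ 2 (dilationIntegral μ K c s w G) (dilationDomain K s w Ω) := by
  have hderiv := fun y hy => hasFDerivAt_dilationIntegral (μ := μ) hK hc hs hw hΩ
    (hG.of_le one_le_two) (y := y) hy
  rw [← one_add_one_eq_two,
    contDiffOn_succ_iff_fderiv_of_isOpen (isOpen_dilationDomain hK hs hw hΩ)]
  refine ⟨fun y hy => (hderiv y hy).differentiableAt.differentiableWithinAt, by simp, ?_⟩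
  exact (contDiffOn_one_dilationIntegral hK (hc.mul hs) hs hw hΩ
    (hG.fderiv_of_isOpen hΩ one_add_one_eq_two.le)).congr fun y hy => (hderiv y hy).fderiv

lemma fderiv_fderiv_dilationIntegral_apply (hK : IsCompact K) (hc : Continuous c)
    (hs : Continuous s) (hw : Continuous w) (hΩ : IsOpen Ω) (hG : ContDiffOn ℝ 2 G Ω) {y : E}
    (hy : y ∈ dilationDomain K s w Ω) (v₁ v₂ : E) :
    fderiv ℝ (fderiv ℝ (dilationIntegral μ K c s w G)) y v₁ v₂ =
      dilationIntegral μ K (c * s * s) s w (fun z => fderiv ℝ (fderiv ℝ G) z v₁ v₂) y := by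
  have hG' : ContDiffOn ℝ 1 (fderiv ℝ G) Ω := hG.fderiv_of_isOpen hΩ one_add_one_eq_two.le
  have hfirst : fderiv ℝ (dilationIntegral μ K c s w G) =ᶠ[𝓝 y]
      dilationIntegral μ K (c * s) s w (fderiv ℝ G) := by
    filter_upwards [(isOpen_dilationDomain hK hs hw hΩ).mem_nhds hy] with z hz
    exact (hasFDerivAt_dilationIntegral hK hc hs hw hΩ (hG.of_le one_le_two) hz).fderiv
  have hG'' : ContinuousOn (fderiv ℝ (fderiv ℝ G)) Ω := hG'.continuousOn_fderiv_of_isOpen hΩ le_rfl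
  have hcss : Continuous (c * s * s) := (hc.mul hs).mul hs
  rw [hfirst.fderiv_eq, (hasFDerivAt_dilationIntegral hK (hc.mul hs) hs hw hΩ hG' hy).fderiv,
    dilationIntegral_clm_apply hK hcss hs hw hG'' hy,
    dilationIntegral_clm_apply hK hcss hs hw (hG''.clm_apply continuousOn_const) hy]

end NormedSpace

section InnerProductSpace

variable [InnerProductSpace ℝ E] [FiniteDimensional ℝ E] [NormedSpace ℝ F]
  [T2Space T] [MeasurableSpace T] [OpensMeasurableSpace T] {μ : Measure T}
  [IsFiniteMeasureOnCompacts μ]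

lemma laplacian_dilationIntegral (hK : IsCompact K) (hc : Continuous c) (hs : Continuous s)
    (hw : Continuous w) (hΩ : IsOpen Ω) (hG : ContDiffOn ℝ 2 G Ω) {y : E}
    (hy : y ∈ dilationDomain K s w Ω) :
    (Δ (dilationIntegral μ K c s w G)) y = dilationIntegral μ K (c * s * s) s w (Δ G) y := by
  have hG'' : ContinuousOn (fderiv ℝ (fderiv ℝ G)) Ω :=
    (hG.fderiv_of_isOpen hΩ one_add_one_eq_two.le).continuousOn_fderiv_of_isOpen hΩ le_rfl
  let e := stdOrthonormalBasis ℝ E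
  calc (Δ (dilationIntegral μ K c s w G)) y
      = ∑ i, dilationIntegral μ K (c * s * s) s w
          (fun z => fderiv ℝ (fderiv ℝ G) z (e i) (e i)) y := by
        simp only [laplacian_eq_iteratedFDeriv_orthonormalBasis _ e, iteratedFDeriv_two_apply,
          fderiv_fderiv_dilationIntegral_apply hK hc hs hw hΩ hG hy, Matrix.cons_val_zero,
          Matrix.cons_val_one]
    _ = ∫ t in K, ∑ i, (c * s * s) t •
          fderiv ℝ (fderiv ℝ G) (s t • y + w t) (e i) (e i) ∂μ :=
        (integral_finsetSum _ fun i _ =>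
          integrableOn_smul_comp_dilation hK ((hc.mul hs).mul hs) hs hw
            ((hG''.clm_apply continuousOn_const).clm_apply continuousOn_const) hy).symm
    _ = dilationIntegral μ K (c * s * s) s w (Δ G) y := by
        simp only [dilationIntegral, laplacian_eq_iteratedFDeriv_orthonormalBasis _ e,
          iteratedFDeriv_two_apply, Matrix.cons_val_zero, Matrix.cons_val_one, Finset.smul_sum]

theorem harmonicOnNhd_dilationIntegral (hK : IsCompact K) (hc : Continuous c) (hs : Continuous s)
    (hw : Continuous w) (hΩ : IsOpen Ω) (hG : HarmonicOnNhd G Ω) :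
    HarmonicOnNhd (dilationIntegral μ K c s w G) (dilationDomain K s w Ω) := by
  intro y hy
  have hD := (isOpen_dilationDomain hK hs hw hΩ).mem_nhds hy
  refine ⟨(contDiffOn_two_dilationIntegral hK hc hs hw hΩ hG.contDiffOn).contDiffAt hD, ?_⟩
  filter_upwards [hD] with z hz
  rw [laplacian_dilationIntegral hK hc hs hw hΩ hG.contDiffOn hz]
  refine setIntegral_eq_zero_of_forall_eq_zero fun t ht => ?_
  rw [(hG _ (hz t ht)).2.self_of_nhds, Pi.zero_apply, smul_zero]

end InnerProductSpace

end DilationIntegral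

section NormRpow

variable {E : Type*} [NormedAddCommGroup E] [InnerProductSpace ℝ E] {z : E}

lemma contDiffAt_norm_rpow_of_ne_zero (b : ℝ) {n : WithTop ℕ∞} (hz : z ≠ 0) :
    ContDiffAt ℝ n (fun z : E => ‖z‖ ^ b) z :=
  (contDiffAt_norm ℝ hz).rpow_const_of_ne (norm_ne_zero_iff.2 hz)

lemma hasFDerivAt_norm_rpow_of_ne_zero (b : ℝ) (hz : z ≠ 0) :
    HasFDerivAt (fun z : E => ‖z‖ ^ b) ((b * ‖z‖ ^ (b - 2)) • innerSL ℝ z) z := by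
  have hsq : ∀ (w : E) (p : ℝ), (‖w‖ ^ 2) ^ (p / 2) = ‖w‖ ^ p := fun w p => by
    rw [← Real.rpow_natCast_mul (norm_nonneg w), Nat.cast_ofNat, mul_div_cancel₀ p two_ne_zero]
  have h := (hasStrictFDerivAt_norm_sq z).hasFDerivAt.rpow_const (p := b / 2)
    (Or.inl (pow_ne_zero 2 (norm_ne_zero_iff.2 hz)))
  simp only [hsq, show b / 2 - 1 = (b - 2) / 2 by ring] at h
  refine h.congr_fderiv ?_
  rw [← Nat.cast_smul_eq_nsmul ℝ, smul_smul]
  congr 1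
  push_cast
  ring

lemma fderiv_fderiv_norm_rpow_apply (b : ℝ) (hz : z ≠ 0) (v : E) :
    fderiv ℝ (fun y => fderiv ℝ (fun z : E => ‖z‖ ^ b) y v) z v =
      b * (b - 2) * ‖z‖ ^ (b - 4) * inner ℝ v z ^ 2 + b * ‖z‖ ^ (b - 2) * ‖v‖ ^ 2 := by
  have hfirst : (fun y => fderiv ℝ (fun z : E => ‖z‖ ^ b) y v) =ᶠ[𝓝 z]
      fun y => b * ‖y‖ ^ (b - 2) * innerSL ℝ v y := by
    filter_upwards [isOpen_ne.mem_nhds hz] with y hy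
    rw [(hasFDerivAt_norm_rpow_of_ne_zero b hy).fderiv, smul_apply, smul_eq_mul,
      innerSL_apply_apply, innerSL_apply_apply, real_inner_comm]
  have hsecond := ((hasFDerivAt_norm_rpow_of_ne_zero (b - 2) hz).const_mul b).mul
    (innerSL ℝ v).hasFDerivAt
  refine (congrArg (· v) (hfirst.fderiv_eq.trans hsecond.fderiv)).trans ?_
  simp only [add_apply, smul_apply, smul_eq_mul, innerSL_apply_apply,
    real_inner_self_eq_norm_sq, real_inner_comm v z]
  ring_nf

variable [FiniteDimensional ℝ E] {F : Type*} [NormedAddCommGroup F] [NormedSpace ℝ F]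

lemma laplacian_eq_sum_fderiv_fderiv_apply {ι : Type*} [Fintype ι] (e : OrthonormalBasis ι ℝ E)
    {f : E → F} (hf : ContDiffAt ℝ 2 f z) :
    (Δ f) z = ∑ i, fderiv ℝ (fun y => fderiv ℝ f y (e i)) z (e i) := by
  have hdiff : DifferentiableAt ℝ (fderiv ℝ f) z :=
    (hf.fderiv_right one_add_one_eq_two.le).differentiableAt one_ne_zero
  simp only [laplacian_eq_iteratedFDeriv_orthonormalBasis f e, iteratedFDeriv_two_apply,
    fderiv_clm_apply hdiff (differentiableAt_const _), fderiv_fun_const]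
  simp

lemma laplacian_norm_rpow (b : ℝ) (hz : z ≠ 0) :
    (Δ fun z : E => ‖z‖ ^ b) z = b * (b - 2 + finrank ℝ E) * ‖z‖ ^ (b - 2) := by
  have hpow : ‖z‖ ^ (b - 2) = ‖z‖ ^ (b - 4) * ‖z‖ ^ 2 := by
    rw [← Real.rpow_add_natCast (norm_ne_zero_iff.2 hz)]
    norm_num [sub_add]
  let e := stdOrthonormalBasis ℝ E
  rw [laplacian_eq_sum_fderiv_fderiv_apply e (contDiffAt_norm_rpow_of_ne_zero b hz)]
  simp only [fderiv_fderiv_norm_rpow_apply b hz, e.norm_eq_one, Finset.sum_add_distrib,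
    ← Finset.mul_sum, e.sum_sq_inner_right, Finset.sum_const, Finset.card_univ, Fintype.card_fin,
    nsmul_eq_mul, hpow]
  ring

lemma harmonicOnNhd_norm_rpow_two_sub_finrank :
    HarmonicOnNhd (fun z : E => ‖z‖ ^ (2 - finrank ℝ E : ℝ)) {0}ᶜ := by
  refine fun z hz => ⟨contDiffAt_norm_rpow_of_ne_zero _ hz, ?_⟩
  filter_upwards [isOpen_compl_singleton.mem_nhds hz] with y hy
  rw [laplacian_norm_rpow _ hy]
  simp

end NormRpow

section Inversion

variable {F : Type*} [NormedAddCommGroup F] [NormedSpace ℝ F]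

lemma image_inv_Ioo_zero_one : Inv.inv '' Ioo (0 : ℝ) 1 = Ioi 1 := by
  rw [image_inv_eq_inv, inv_Ioo_0_left one_pos, inv_one]

lemma hasDerivWithinAt_inv_Ioo_zero_one (t : ℝ) (ht : t ∈ Ioo (0 : ℝ) 1) :
    HasDerivWithinAt Inv.inv (-(t ^ 2)⁻¹) (Ioo 0 1) t :=
  hasDerivWithinAt_inv ht.1.ne' _

lemma integrableOn_Ioi_one_iff_comp_inv (g : ℝ → F) :
    IntegrableOn g (Ioi 1) ↔ IntegrableOn (fun t => (t ^ 2)⁻¹ • g t⁻¹) (Ioo 0 1) := by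
  rw [← image_inv_Ioo_zero_one, integrableOn_image_iff_integrableOn_abs_deriv_smul measurableSet_Ioo
    hasDerivWithinAt_inv_Ioo_zero_one inv_injective.injOn]
  simp only [abs_neg, abs_inv, abs_sq]

lemma integral_Ioi_one_eq_comp_inv (g : ℝ → F) :
    ∫ l in Ioi 1, g l = ∫ t in Ioo (0 : ℝ) 1, (t ^ 2)⁻¹ • g t⁻¹ := by
  rw [← image_inv_Ioo_zero_one, integral_image_eq_integral_abs_deriv_smul measurableSet_Ioo
    hasDerivWithinAt_inv_Ioo_zero_one inv_injective.injOn]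
  simp only [abs_neg, abs_inv, abs_sq]

end Inversion

section Ray

variable {E : Type*} [NormedAddCommGroup E] [NormedSpace ℝ E]

lemma forall_smul_add_ne_zero_of_ray {x u : E} (hu : u ≠ 0)
    (hx : ∀ l : ℝ, 1 ≤ l → x + l • u ≠ 0) {t : ℝ} (ht : t ∈ Icc (0 : ℝ) 1) : t • x + u ≠ 0 := by
  rcases ht.1.eq_or_lt with rfl | hpos
  · simpa using hu
  · have hscale : t • x + u = t • (x + t⁻¹ • u) := by
      rw [smul_add, smul_inv_smul₀ hpos.ne']
    rw [hscale]
    exact smul_ne_zero hpos.ne' (hx _ ((one_le_inv₀ hpos).2 ht.2))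

lemma inv_sq_mul_norm_ray_rpow (x u : E) (b : ℝ) {t : ℝ} (ht : 0 < t) :
    (t ^ 2)⁻¹ * ‖x + t⁻¹ • u‖ ^ b = t ^ (-b - 2) * ‖t • x + u‖ ^ b := by
  have hscale : x + t⁻¹ • u = t⁻¹ • (t • x + u) := by
    rw [smul_add, inv_smul_smul₀ ht.ne']
  rw [hscale, norm_smul, Real.norm_of_nonneg (inv_nonneg.2 ht.le),
    Real.mul_rpow (inv_nonneg.2 ht.le) (norm_nonneg _), Real.inv_rpow ht.le, ← mul_assoc,
    Real.rpow_sub ht, Real.rpow_neg ht.le, Real.rpow_two]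
  ring

lemma integrableOn_ray_norm_rpow_iff (x u : E) (b : ℝ) :
    IntegrableOn (fun l : ℝ => ‖x + l • u‖ ^ b) (Ioi 1) ↔
      IntegrableOn (fun t : ℝ => t ^ (-b - 2) * ‖t • x + u‖ ^ b) (Icc 0 1) := by
  rw [integrableOn_Ioi_one_iff_comp_inv, integrableOn_Icc_iff_integrableOn_Ioo]
  exact integrableOn_congr_fun (fun t ht => inv_sq_mul_norm_ray_rpow x u b ht.1) measurableSet_Ioo

lemma integral_ray_norm_rpow (x u : E) (b : ℝ) :
    ∫ l in Ioi (1 : ℝ), ‖x + l • u‖ ^ b =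
      ∫ t in Icc (0 : ℝ) 1, t ^ (-b - 2) * ‖t • x + u‖ ^ b := by
  rw [integral_Ioi_one_eq_comp_inv, integral_Icc_eq_integral_Ioo]
  exact setIntegral_congr_fun measurableSet_Ioo fun t ht => inv_sq_mul_norm_ray_rpow x u b ht.1

end Ray

theorem harmonic_semi_infinite_line_integral_general {E : Type*} [NormedAddCommGroup E]
    [InnerProductSpace ℝ E] [FiniteDimensional ℝ E] (hE : 4 ≤ finrank ℝ E) {u : E} (hu : u ≠ 0)
    {x : E} (hx : ∀ l : ℝ, 1 ≤ l → x + l • u ≠ 0) :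
    IntegrableOn (fun l : ℝ => ‖x + l • u‖ ^ (2 - finrank ℝ E : ℝ)) (Ioi 1) ∧
      HarmonicAt (fun z => ∫ l in Ioi (1 : ℝ), ‖z + l • u‖ ^ (2 - finrank ℝ E : ℝ)) x := by
  have hweight : Continuous fun t : ℝ => t ^ (-(2 - finrank ℝ E : ℝ) - 2) :=
    Real.continuous_rpow_const (by linarith [show (4 : ℝ) ≤ finrank ℝ E by exact_mod_cast hE])
  have hker := harmonicOnNhd_norm_rpow_two_sub_finrank (E := E)
  have hxD : x ∈ dilationDomain (Icc (0 : ℝ) 1) id (fun _ => u) {0}ᶜ := fun t ht =>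
    forall_smul_add_ne_zero_of_ray hu hx ht
  constructor
  · exact (integrableOn_ray_norm_rpow_iff x u _).2 (integrableOn_smul_comp_dilation isCompact_Icc
      hweight continuous_id continuous_const hker.continuousOn hxD)
  · simp only [integral_ray_norm_rpow]
    exact harmonicOnNhd_dilationIntegral isCompact_Icc hweight continuous_id continuous_const
      isOpen_compl_singleton hker x hxD

lemma laplacian_eq_zero_of_harmonicAt {d : ℕ} {f : EuclideanSpace ℝ (Fin d) → ℝ}
    {x : EuclideanSpace ℝ (Fin d)} (hf : HarmonicAt f x) : laplacian f x = 0 := by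
  have hΔ : (Δ f) x = 0 := hf.2.self_of_nhds
  rw [← hΔ, laplacian_eq_sum_fderiv_fderiv_apply (EuclideanSpace.basisFun _ ℝ) hf.1]
  simp only [laplacian, EuclideanSpace.basisFun_apply]

/-- For `d ≥ 5` and `u ≠ 0`, the semi-infinite line integral
`h(x) = ∫₁^∞ ‖x + λu‖^{2-d} dλ` converges absolutely and defines a harmonic function on
the open set of points `x` with `x + λu ≠ 0` for all `λ ≥ 1`. -/
theorem harmonic_semi_infinite_line_integral (d : ℕ) (hd : 5 ≤ d)
    (u : EuclideanSpace ℝ (Fin d)) (hu : u ≠ 0) :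
    ∀ x ∈ {x : EuclideanSpace ℝ (Fin d) | ∀ l : ℝ, 1 ≤ l → x + l • u ≠ 0},
      IntegrableOn (fun l : ℝ => ‖x + l • u‖ ^ ((2 : ℝ) - (d : ℝ))) (Ioi 1) volume ∧
      laplacian
        (fun z => ∫ l in Ioi (1 : ℝ), ‖z + l • u‖ ^ ((2 : ℝ) - (d : ℝ))) x = 0 := by
  intro x hx
  obtain ⟨hint, hharm⟩ := harmonic_semi_infinite_line_integral_general
    (by rw [finrank_euclideanSpace_fin]; lia) hu hx
  rw [finrank_euclideanSpace_fin] at hint hharm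
  exact ⟨hint, laplacian_eq_zero_of_harmonicAt hharm⟩
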